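/- Radius preservation: let x_1,…,x_n ∈ ℝ^d, let x_B ∈ ℝ^d and B > 0 satisfy ‖x_i − x_B‖₂ ≤ B for all i (x_B is the center and B the radius of an enclosing ball of the points). Let X_B ∈ ℝ^{(n+1)×d} be the matrix whose first n rows are x_1^T,…,x_n^T and whose last row is x_B^T, with rank ρ_B and compact singular value decomposition X_B = U_B Σ_B V_B^T. Let ε ∈ (0,1) and let R ∈ ℝ^{d×r} satisfy ‖I_{ρ_B} − V_B^T R R^T V_B‖₂ ≤ ε. Then for every i = 1,…,n, ‖R^T x_i − R^T x_B‖₂² ≤ (1 + ε)·B²; consequently, the minimum enclosing ball radius B̃ of the points R^T x_1,…,R^T x_n (the infimum over centers c ∈ ℝ^r of max_i ‖R^T x_i − c‖₂) satisfies B̃² ≤ (1 + ε)·B². -/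

import Mathlib

open Matrix

/-- Euclidean norm of a vector in ℝ^n. -/
noncomputable def euclNorm {n : ℕ} (x : Fin n → ℝ) : ℝ := Real.sqrt (∑ i, x i ^ 2)

/-- Spectral norm (ℓ₂ operator norm) of a real matrix: the supremum of `‖A x‖₂`
over unit vectors `x`. -/
noncomputable def specNorm {m n : ℕ} (A : Matrix (Fin m) (Fin n) ℝ) : ℝ :=
  sSup {c : ℝ | ∃ x : Fin n → ℝ, euclNorm x = 1 ∧ c = euclNorm (A.mulVec x)}

/-!
Let `A = RᵀV`, where the columns of `V` are an orthonormal basis of a subspace containing all the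
differences `x_i - x_B`. The C⋆-identity gives `‖A‖² = ‖AᵀA‖ ≤ 1 + ‖1 - AᵀA‖ ≤ 1 + ε`. Since `V` is
an isometry, `x_i - x_B = Vw` with `‖w‖ = ‖x_i - x_B‖ ≤ B`, so
`‖Rᵀ(x_i - x_B)‖² = ‖Aw‖² ≤ (1 + ε)B²`, and the ball of squared radius `(1 + ε)B²` centred at
`Rᵀx_B` encloses the sampled points. The rows of a product `UΣVᵀ` lie in the column space of `V`,
so the right singular vectors are such a basis.
-/

theorem sq_iInf_iSup_le {α ι : Type*} {f : α → ι → ℝ} (hf : ∀ a i, 0 ≤ f a i)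
    {M : ℝ} (hM : 0 ≤ M) (a : α) (ha : ∀ i, f a i ^ 2 ≤ M) :
    (⨅ a, ⨆ i, f a i) ^ 2 ≤ M := by
  have iSup_nonneg (b : α) : 0 ≤ ⨆ i, f b i := Real.iSup_nonneg (hf b)
  have iInf_le_sqrt : ⨅ b, ⨆ i, f b i ≤ √M :=
    calc ⨅ b, ⨆ i, f b i
      _ ≤ ⨆ i, f a i := ciInf_le ⟨0, Set.forall_mem_range.2 iSup_nonneg⟩ a
      _ ≤ √M := Real.iSup_le (fun i => Real.le_sqrt_of_sq_le (ha i)) (Real.sqrt_nonneg M)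
  exact (Real.le_sqrt (Real.iInf_nonneg iSup_nonneg) hM).1 iInf_le_sqrt

section EuclideanOperatorNorm

open scoped Matrix.Norms.L2Operator

variable {𝕜 m n p : Type*} [RCLike 𝕜] [Fintype m] [Fintype n] [DecidableEq n] [Fintype p]

theorem l2_opNorm_one_le : ‖(1 : Matrix n n 𝕜)‖ ≤ 1 := by
  rw [← diagonal_one, l2_opNorm_diagonal]
  exact (pi_norm_const_le (1 : 𝕜)).trans norm_one.le

theorem sq_l2_opNorm_le (A : Matrix m n 𝕜) : ‖A‖ ^ 2 ≤ 1 + ‖1 - Aᴴ * A‖ :=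
  calc ‖A‖ ^ 2
    _ = ‖1 - (1 - Aᴴ * A)‖ := by rw [sub_sub_cancel, l2_opNorm_conjTranspose_mul_self, sq]
    _ ≤ ‖(1 : Matrix n n 𝕜)‖ + ‖1 - Aᴴ * A‖ := norm_sub_le _ _
    _ ≤ 1 + ‖1 - Aᴴ * A‖ := by gcongr; exact l2_opNorm_one_le

theorem norm_toLp_mulVec_of_conjTranspose_mul_self_eq_one {V : Matrix m n 𝕜} (hV : Vᴴ * V = 1)
    (w : n → 𝕜) : ‖WithLp.toLp 2 (V *ᵥ w)‖ = ‖WithLp.toLp 2 w‖ := by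
  have inner_eq : inner 𝕜 (WithLp.toLp 2 (V *ᵥ w)) (WithLp.toLp 2 (V *ᵥ w)) =
      inner 𝕜 (WithLp.toLp 2 w) (WithLp.toLp 2 w) := by
    rw [EuclideanSpace.inner_toLp_toLp, EuclideanSpace.inner_toLp_toLp, dotProduct_comm,
      star_mulVec, ← dotProduct_mulVec, mulVec_mulVec, hV, one_mulVec, dotProduct_comm]
  rw [@norm_eq_sqrt_re_inner 𝕜, @norm_eq_sqrt_re_inner 𝕜, inner_eq]

theorem sq_norm_toLp_mulVec_le_of_mem_range (S : Matrix p m 𝕜) {V : Matrix m n 𝕜}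
    (hV : Vᴴ * V = 1) {v : m → 𝕜} (hv : v ∈ V.mulVecLin.range) :
    ‖WithLp.toLp 2 (S *ᵥ v)‖ ^ 2 ≤
      (1 + ‖1 - (S * V)ᴴ * (S * V)‖) * ‖WithLp.toLp 2 v‖ ^ 2 := by
  obtain ⟨w, rfl⟩ := hv
  rw [mulVecLin_apply, norm_toLp_mulVec_of_conjTranspose_mul_self_eq_one hV, mulVec_mulVec]
  calc ‖WithLp.toLp 2 ((S * V) *ᵥ w)‖ ^ 2
    _ ≤ (‖S * V‖ * ‖WithLp.toLp 2 w‖) ^ 2 := by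
      gcongr; exact l2_opNorm_mulVec (S * V) (WithLp.toLp 2 w)
    _ = ‖S * V‖ ^ 2 * ‖WithLp.toLp 2 w‖ ^ 2 := mul_pow _ _ 2
    _ ≤ _ := by gcongr; exact sq_l2_opNorm_le (S * V)

end EuclideanOperatorNorm

theorem mem_range_mulVecLin_of_eq_mul_transpose {m n k R : Type*} [CommSemiring R] [Fintype k]
    {x : m → n → R} {A : Matrix m k R} {V : Matrix n k R} (hx : of x = A * Vᵀ) (i : m) :
    x i ∈ V.mulVecLin.range :=
  ⟨A i, by rw [mulVecLin_apply, ← vecMul_transpose, ← mul_apply_eq_vecMul, ← hx]; rfl⟩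

theorem sub_mem_range_mulVecLin_of_snoc_eq_mul_transpose {n : ℕ} {m k R : Type*} [CommRing R]
    [Fintype k] {x : Fin n → m → R} {c : m → R} {A : Matrix (Fin (n + 1)) k R} {V : Matrix m k R}
    (h : of (Fin.snoc x c) = A * Vᵀ) (i : Fin n) : x i - c ∈ V.mulVecLin.range := by
  have row_mem := mem_range_mulVecLin_of_eq_mul_transpose h
  have point_mem : x i ∈ V.mulVecLin.range := by
    simpa only [Fin.snoc_castSucc] using row_mem i.castSucc
  have center_mem : c ∈ V.mulVecLin.range := by
    simpa only [Fin.snoc_last] using row_mem (Fin.last n)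
  exact Submodule.sub_mem _ point_mem center_mem

theorem euclNorm_eq_norm_toLp {n : ℕ} (x : Fin n → ℝ) : euclNorm x = ‖WithLp.toLp 2 x‖ := by
  simp only [euclNorm, EuclideanSpace.norm_eq, Real.norm_eq_abs, sq_abs]

theorem euclNorm_nonneg {n : ℕ} (x : Fin n → ℝ) : 0 ≤ euclNorm x :=
  Real.sqrt_nonneg _

theorem specNorm_nonneg {m n : ℕ} (A : Matrix (Fin m) (Fin n) ℝ) : 0 ≤ specNorm A :=
  Real.sSup_nonneg <| by
    rintro _ ⟨x, -, rfl⟩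
    exact euclNorm_nonneg _

open scoped Matrix.Norms.L2Operator in
theorem specNorm_eq_l2_opNorm {m n : ℕ} (A : Matrix (Fin m) (Fin n) ℝ) : specNorm A = ‖A‖ := by
  rw [l2_opNorm_def, ← ContinuousLinearMap.sSup_sphere_eq_norm, specNorm]
  congr 1
  ext c
  simp only [euclNorm_eq_norm_toLp, Set.mem_ofPred_eq, Set.mem_image, mem_sphere_zero_iff_norm,
    eq_comm (a := c)]
  exact (WithLp.equiv 2 (Fin n → ℝ)).symm.exists_congr_left

theorem sq_euclNorm_mulVec_le_of_mem_range {d r k : ℕ} (R : Matrix (Fin d) (Fin r) ℝ)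
    {V : Matrix (Fin d) (Fin k) ℝ} (hV : Vᵀ * V = 1) {v : Fin d → ℝ}
    (hv : v ∈ V.mulVecLin.range) :
    euclNorm (Rᵀ *ᵥ v) ^ 2 ≤ (1 + specNorm (1 - Vᵀ * R * Rᵀ * V)) * euclNorm v ^ 2 := by
  have gram_eq : (Rᵀ * V)ᴴ * (Rᵀ * V) = Vᵀ * R * Rᵀ * V := by
    rw [conjTranspose_eq_transpose_of_trivial, transpose_mul, transpose_transpose,
      Matrix.mul_assoc (Vᵀ * R)]
  rw [euclNorm_eq_norm_toLp, euclNorm_eq_norm_toLp, specNorm_eq_l2_opNorm, ← gram_eq]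
  exact sq_norm_toLp_mulVec_le_of_mem_range Rᵀ hV hv

theorem radius_preservation_general {ι : Type*} {d r k : ℕ} {x : ι → Fin d → ℝ} {xB : Fin d → ℝ}
    {B : ℝ} (henc : ∀ i, euclNorm (x i - xB) ≤ B)
    {V : Matrix (Fin d) (Fin k) ℝ} (hV : Vᵀ * V = 1) (hx : ∀ i, x i - xB ∈ V.mulVecLin.range)
    {R : Matrix (Fin d) (Fin r) ℝ} {ε : ℝ} (hE : specNorm (1 - Vᵀ * R * Rᵀ * V) ≤ ε) :
    (∀ i, euclNorm (Rᵀ *ᵥ x i - Rᵀ *ᵥ xB) ^ 2 ≤ (1 + ε) * B ^ 2) ∧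
    (⨅ c : Fin r → ℝ, ⨆ i, euclNorm (Rᵀ *ᵥ x i - c)) ^ 2 ≤ (1 + ε) * B ^ 2 := by
  have one_add_nonneg : 0 ≤ 1 + ε := add_nonneg zero_le_one ((specNorm_nonneg _).trans hE)
  have sq_dist_le (i : ι) : euclNorm (Rᵀ *ᵥ x i - Rᵀ *ᵥ xB) ^ 2 ≤ (1 + ε) * B ^ 2 :=
    calc euclNorm (Rᵀ *ᵥ x i - Rᵀ *ᵥ xB) ^ 2
      _ = euclNorm (Rᵀ *ᵥ (x i - xB)) ^ 2 := by rw [mulVec_sub]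
      _ ≤ (1 + specNorm (1 - Vᵀ * R * Rᵀ * V)) * euclNorm (x i - xB) ^ 2 :=
        sq_euclNorm_mulVec_le_of_mem_range R hV (hx i)
      _ ≤ (1 + ε) * B ^ 2 := by
        gcongr
        · exact euclNorm_nonneg _
        · exact henc i
  exact ⟨sq_dist_le, sq_iInf_iSup_le (fun _ _ => euclNorm_nonneg _)
    (mul_nonneg one_add_nonneg (sq_nonneg B)) (Rᵀ *ᵥ xB) sq_dist_le⟩

/-- **Theorem 5 (radius preservation).** Let `x_1,…,x_n ∈ ℝ^d` be enclosed in the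
ball of center `x_B` and radius `B > 0`, let `X_B ∈ ℝ^{(n+1)×d}` be the matrix whose
first `n` rows are the `x_i` and whose last row is `x_B`, with compact SVD
`X_B = U_B Σ_B V_Bᵀ` of rank `ρ_B`.  If `R ∈ ℝ^{d×r}` satisfies
`‖I_{ρ_B} − V_BᵀRRᵀV_B‖₂ ≤ ε` with `ε ∈ (0,1)`, then every sampled point satisfies
`‖Rᵀx_i − Rᵀx_B‖₂² ≤ (1+ε)B²`, and the minimum enclosing ball radius `B̃` of the
sampled points satisfies `B̃² ≤ (1+ε)B²`. -/
theorem radius_preservation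
    (n d r ρB : ℕ)
    (x : Fin n → Fin d → ℝ) (xB : Fin d → ℝ) (B : ℝ) (hB : 0 < B)
    (henc : ∀ i, euclNorm (x i - xB) ≤ B)
    (XB : Matrix (Fin (n + 1)) (Fin d) ℝ)
    (hXB : XB = Matrix.of (Fin.snoc x xB))
    (hrank : XB.rank = ρB)
    (UB : Matrix (Fin (n + 1)) (Fin ρB) ℝ) (SB : Matrix (Fin ρB) (Fin ρB) ℝ)
    (VB : Matrix (Fin d) (Fin ρB) ℝ)
    (hU : UBᵀ * UB = 1) (hV : VBᵀ * VB = 1)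
    (hS : ∃ σ : Fin ρB → ℝ, (∀ i, 0 < σ i) ∧ SB = Matrix.diagonal σ)
    (hSVD : XB = UB * SB * VBᵀ)
    (ε : ℝ) (hε : ε ∈ Set.Ioo (0 : ℝ) 1)
    (R : Matrix (Fin d) (Fin r) ℝ)
    (hE : specNorm ((1 : Matrix (Fin ρB) (Fin ρB) ℝ) - VBᵀ * R * Rᵀ * VB) ≤ ε) :
    (∀ i, euclNorm (Rᵀ.mulVec (x i) - Rᵀ.mulVec xB) ^ 2 ≤ (1 + ε) * B ^ 2) ∧
    (⨅ c : Fin r → ℝ, ⨆ i : Fin n, euclNorm (Rᵀ.mulVec (x i) - c)) ^ 2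
      ≤ (1 + ε) * B ^ 2 := by
  exact radius_preservation_general henc hV
    (sub_mem_range_mulVecLin_of_snoc_eq_mul_transpose (hXB.symm.trans hSVD)) hE
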